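/- Fix a nonnegative integer p and a sequence of reals (α_n)_{n≥1} with α_n ≥ 0 for all n and sup_n n·α_n < ∞. Then there exist a constant K > 0 and an integer N ≥ 1 such that for every n ≥ N and every continuous function f : [0,∞) → ℝ satisfying |f(t)| ≤ M_f·(1+t²) for all t ≥ 0 (for some M_f > 0) and such that lim_{x→∞} f(x)/(1+x²) exists and is finite, sup_{x ≥ 0} |L_n^{(α_n)}(f;x) - f(x)|/(1+x²)^{5/2} ≤ K·Ω(f, 1/√n). -/

import Mathlib

/-!
With `α = α_n` and `m = n + p`, the weight `w0 n p α x k` is the probability of drawing exactly `k`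
white balls before the `m`-th black one in a Pólya urn with initial masses `x` (white) and `1`
(black) and reinforcement `α`. The theorem follows from two facts.

*Moments.* The weights sum to `1` (`hasSum_urnWeight`): passing from `m` to `m + 1`, the partial sums
telescope up to the probability `urnCount` of a given colour count, which tends to `0` because a
positive limit would bound a summable sequence below by a harmonic series. Absorbing one factor `k`
into the weight shifts the urn parameters (`urnWeight_absorb`), so the `r`-th factorial moment is
`∏_{i<r} (m + i)(x + iα) / (1 - (i + 1)α)` whenever `rα < 1`. As `n α_n` is bounded, each factor lies
between `n x` and `n x + O(1 + x)`, and therefore the central moments of order `2` and `4` of `k / n`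
are `O((1 + x)² / n)` and `O((1 + x)⁴ / n)` (`centralMoments`).

*Modulus.* Chaining steps of length at most `δ` gives
`|f t - f x| ≤ Ω(f, δ) (1 + max(t, x)²) (1 + |t - x| / δ)`. For `δ = 1 / √n` the right side is at most
`Ω(f, δ)` times a polynomial in `(t - x)²` of degree two (`abs_sub_le_poly`). Its mean under the
weights is `O((1 + x²)²)`, which is below `O((1 + x²)^{5/2})`.
-/

/-- The weights of the generalized positive linear operator with λ = 0 (IPED case). -/
noncomputable def w0 (n p : ℕ) (α x : ℝ) (k : ℕ) : ℝ :=
  (Nat.choose (n + p + k - 1) k : ℝ) * (∏ i ∈ Finset.range k, (x + (i : ℝ) * α)) *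
    (∏ i ∈ Finset.range (n + p), (1 + (i : ℝ) * α)) /
    (∏ i ∈ Finset.range (n + p + k), (1 + x + (i : ℝ) * α))

/-- The weighted modulus of continuity:
`Ω(f,δ) = sup{ |f(x+h) - f(x)|/(1+(x+h)²) : x ≥ 0, 0 < h ≤ δ }`. -/
noncomputable def bigOmega (f : ℝ → ℝ) (δ : ℝ) : ℝ :=
  sSup {y : ℝ | ∃ x ≥ (0 : ℝ), ∃ h : ℝ, 0 < h ∧ h ≤ δ ∧
    y = |f (x + h) - f x| / (1 + (x + h) ^ 2)}

/-! ### The urn distribution -/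

/-- The rising product `x (x + a) ⋯ (x + (k - 1) a)`. -/
noncomputable def risingProd (a x : ℝ) (k : ℕ) : ℝ := ∏ i ∈ Finset.range k, (x + (i : ℝ) * a)

/-- The weights with the constant `1` in `w0` replaced by a parameter `b`: in the Pólya urn with
initial masses `x` (white) and `b` (black) and reinforcement `a`, the probability of drawing exactly
`k` white balls before the `m`-th black one. -/
noncomputable def urnWeight (a : ℝ) (m : ℕ) (x b : ℝ) (k : ℕ) : ℝ :=
  (Nat.choose (m + k - 1) k : ℝ) * risingProd a x k * risingProd a b m /
    risingProd a (b + x) (m + k)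

/-- In the same urn, the probability that the first `m + k` draws show exactly `k` white balls. -/
noncomputable def urnCount (a : ℝ) (m : ℕ) (x b : ℝ) (k : ℕ) : ℝ :=
  (Nat.choose (m + k) k : ℝ) * risingProd a x k * risingProd a b m /
    risingProd a (b + x) (m + k)

lemma w0_eq_urnWeight (n p : ℕ) (a x : ℝ) (k : ℕ) :
    w0 n p a x k = urnWeight a (n + p) x 1 k := rfl

lemma risingProd_succ (a x : ℝ) (k : ℕ) :
    risingProd a x (k + 1) = risingProd a x k * (x + (k : ℝ) * a) := by
  simp [risingProd, Finset.prod_range_succ]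

lemma risingProd_succ' (a x : ℝ) (k : ℕ) :
    risingProd a x (k + 1) = x * risingProd a (x + a) k := by
  rw [risingProd, Finset.prod_range_succ', mul_comm, risingProd]
  congr 1
  · simp
  · refine Finset.prod_congr rfl fun i _ => ?_
    push_cast
    ring

lemma risingProd_nonneg {a x : ℝ} (ha : 0 ≤ a) (hx : 0 ≤ x) (k : ℕ) : 0 ≤ risingProd a x k :=
  Finset.prod_nonneg fun i _ => by positivity

lemma risingProd_pos {a x : ℝ} (ha : 0 ≤ a) (hx : 0 < x) (k : ℕ) : 0 < risingProd a x k :=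
  Finset.prod_pos fun i _ => by positivity

lemma urnWeight_nonneg {a x b : ℝ} (ha : 0 ≤ a) (hx : 0 ≤ x) (hb : 0 < b) (m k : ℕ) :
    0 ≤ urnWeight a m x b k := by
  have h1 := risingProd_nonneg ha hx k
  have h2 := risingProd_nonneg ha hb.le m
  have h3 := risingProd_nonneg ha (add_nonneg hb.le hx) (m + k)
  unfold urnWeight
  positivity

lemma urnCount_nonneg {a x b : ℝ} (ha : 0 ≤ a) (hx : 0 ≤ x) (hb : 0 < b) (m k : ℕ) :
    0 ≤ urnCount a m x b k := by
  have h1 := risingProd_nonneg ha hx k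
  have h2 := risingProd_nonneg ha hb.le m
  have h3 := risingProd_nonneg ha (add_nonneg hb.le hx) (m + k)
  unfold urnCount
  positivity

/-- The `(m+1)`-st black ball comes after exactly `k` white ones when the first `m + k` draws show
`k` white balls and the next draw is black. -/
lemma urnWeight_succ {a x b : ℝ} (ha : 0 ≤ a) (hx : 0 ≤ x) (hb : 0 < b) (m k : ℕ) :
    urnWeight a (m + 1) x b k =
      urnCount a m x b k * ((b + m * a) / (b + x + ((m + k : ℕ) : ℝ) * a)) := by
  have h3 := (risingProd_pos ha (by positivity : 0 < b + x) (m + k)).ne'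
  have h4 : b + x + ((m + k : ℕ) : ℝ) * a ≠ 0 := by positivity
  unfold urnWeight urnCount
  rw [show m + 1 + k - 1 = m + k by omega, show m + 1 + k = m + k + 1 by omega,
    risingProd_succ, risingProd_succ]
  field_simp

/-- Both sides are the probability that draw number `m + k + 1` yields the `(k+1)`-st white ball;
summed over `k`, the identity relates the partial sums for `m` and `m + 1`. -/
lemma urnCount_telescope {a x b : ℝ} (ha : 0 ≤ a) (hx : 0 ≤ x) (hb : 0 < b) (m k : ℕ) :
    urnCount a m x b (k + 1) - urnWeight a m x b (k + 1) =
      urnCount a m x b k - urnWeight a (m + 1) x b k := by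
  rw [urnWeight_succ ha hx hb]
  have h3 := (risingProd_pos ha (by positivity : 0 < b + x) (m + k)).ne'
  have h4 : b + x + ((m : ℝ) + k) * a ≠ 0 := by positivity
  unfold urnWeight urnCount
  rw [show m + (k + 1) - 1 = m + k by omega, show m + (k + 1) = m + k + 1 by omega,
    risingProd_succ, risingProd_succ, Nat.choose_succ_succ]
  push_cast
  field_simp
  ring

lemma sum_urnWeight_succ {a x b : ℝ} (ha : 0 ≤ a) (hx : 0 ≤ x) (hb : 0 < b) (m K : ℕ) :
    ∑ k ∈ Finset.range K, urnWeight a (m + 1) x b k =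
      ∑ k ∈ Finset.range (K + 1), urnWeight a m x b k - urnCount a m x b K := by
  induction K with
  | zero => simp [urnWeight, urnCount]
  | succ K ih =>
    rw [Finset.sum_range_succ, ih, Finset.sum_range_succ _ (K + 1)]
    linarith [urnCount_telescope ha hx hb m K]

/-- The weights form a probability distribution: almost surely the `m`-th black ball is drawn. -/
lemma hasSum_urnWeight {a x b : ℝ} (ha : 0 ≤ a) (hx : 0 ≤ x) (hb : 0 < b) (m : ℕ) :
    HasSum (urnWeight a m x b) 1 := by
  induction m with
  | zero =>
    have h : urnWeight a 0 x b 0 = 1 := by simp [urnWeight, risingProd]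
    rw [← h]
    refine hasSum_single 0 fun k hk => ?_
    have : (0 + k - 1).choose k = 0 := Nat.choose_eq_zero_of_lt (by omega)
    rw [urnWeight, this]
    simp
  | succ m ih =>
    have hnn := urnWeight_nonneg ha hx hb (m + 1)
    have hsum : Summable (urnWeight a (m + 1) x b) := by
      refine summable_of_sum_range_le (c := 1) hnn fun K => ?_
      rw [sum_urnWeight_succ ha hx hb]
      have := sum_le_hasSum (Finset.range (K + 1))
        (fun i _ => urnWeight_nonneg ha hx hb m i) ih
      linarith [urnCount_nonneg ha hx hb m K]
    obtain ⟨S, hS⟩ := hsum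
    have hlim : Filter.Tendsto (urnCount a m x b) Filter.atTop (nhds (1 - S)) := by
      have h1 := (ih.tendsto_sum_nat.comp (Filter.tendsto_add_atTop_nat 1)).sub hS.tendsto_sum_nat
      refine h1.congr fun K => ?_
      simp only [Function.comp]
      rw [sum_urnWeight_succ ha hx hb]
      ring
    have hL : 0 ≤ 1 - S := ge_of_tendsto' hlim fun K => urnCount_nonneg ha hx hb m K
    suffices h : 1 - S = 0 by
      rwa [show (1 : ℝ) = S by linarith]
    by_contra hne
    have hpos : 0 < 1 - S := lt_of_le_of_ne hL (Ne.symm hne)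
    -- A positive limit of `urnCount` would bound the summable weights below by a harmonic series.
    have hev : ∀ᶠ K in Filter.atTop, (1 - S) / 2 < urnCount a m x b K :=
      hlim.eventually (lt_mem_nhds (by linarith))
    set D : ℝ := b + x + (m + 1) * a with hD
    have hDpos : 0 < D := by positivity
    have hharm : Summable fun K : ℕ => (1 - S) / 2 * (b / D) * (1 / (K + 1 : ℝ)) := by
      refine Summable.of_norm_bounded_eventually_nat hS.summable ?_
      filter_upwards [hev] with K hK
      rw [urnWeight_succ ha hx hb, Real.norm_of_nonneg (by positivity), mul_assoc]
      refine mul_le_mul hK.le ?_ (by positivity) (urnCount_nonneg ha hx hb m K)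
      rw [div_mul_div_comm]
      refine div_le_div₀ (by positivity) ?_ (by positivity) ?_
      · nlinarith [mul_nonneg (Nat.cast_nonneg (α := ℝ) m) ha]
      · rw [hD]
        push_cast
        have e1 : 0 ≤ (K : ℝ) := Nat.cast_nonneg K
        have e2 : 0 ≤ (m : ℝ) * a := by positivity
        nlinarith [mul_nonneg e1 (add_nonneg hb.le hx), mul_nonneg e1 e2, mul_nonneg e1 ha]
    have h2 := (summable_mul_left_iff (by positivity)).mp hharm
    exact Real.not_summable_one_div_natCast ((summable_nat_add_iff 1).mp (by simpa using h2))

/-! ### Moments -/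

/-- The absorption identity behind the factorial moments: removing one white ball shifts the urn
parameters. -/
lemma urnWeight_absorb {a x b : ℝ} (ha : 0 ≤ a) (hx : 0 ≤ x) (hb : 0 < b - a) (m k : ℕ) :
    urnWeight a m x b (k + 1) * (k + 1) =
      m * x / (b - a) * urnWeight a (m + 1) (x + a) (b - a) k := by
  have h3 := (risingProd_pos ha (by linarith : 0 < b + x) (m + k + 1)).ne'
  have hc : ((m + k).choose (k + 1) : ℝ) * (k + 1) = (m + k).choose k * m := by
    have := Nat.choose_succ_right_eq (m + k) k
    rw [Nat.add_sub_cancel] at this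
    exact_mod_cast this
  unfold urnWeight
  rw [show m + (k + 1) - 1 = m + k by omega, show m + 1 + k - 1 = m + k by omega,
    show m + (k + 1) = m + k + 1 by omega, show m + 1 + k = m + k + 1 by omega,
    show b - a + (x + a) = b + x by ring, risingProd_succ' a x, risingProd_succ' a (b - a),
    show b - a + a = b by ring]
  field_simp
  linear_combination (x * risingProd a (x + a) k * risingProd a b m) * hc

lemma hasSum_of_eq {f g : ℕ → ℝ} {s : ℝ} (h : HasSum f s) (hfg : ∀ k, g k = f k) :
    HasSum g s := by
  rwa [funext hfg]

/-- The `r`-th factorial moment of `urnWeight`. -/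
noncomputable def urnMoment (a : ℝ) (m : ℕ) (x b : ℝ) (r : ℕ) : ℝ :=
  ∏ i ∈ Finset.range r, ((m + i : ℝ) * (x + i * a) / (b - (i + 1) * a))

lemma hasSum_factorialMoment {a : ℝ} (ha : 0 ≤ a) (r : ℕ) : ∀ (m : ℕ) (x b : ℝ), 0 ≤ x →
    0 < b - r * a → HasSum (fun k => urnWeight a m x b k * (k.descFactorial r : ℝ))
      (urnMoment a m x b r) := by
  induction r with
  | zero =>
    intro m x b hx hb
    simpa [urnMoment] using hasSum_urnWeight ha hx (by simpa using hb) m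
  | succ r ih =>
    intro m x b hx hb
    push_cast at hb
    have hra : 0 ≤ (r : ℝ) * a := by positivity
    have hba : 0 < b - a := by nlinarith
    have h := (ih (m + 1) (x + a) (b - a) (by positivity) (by linarith)).mul_left
      (m * x / (b - a))
    have hval : urnMoment a m x b (r + 1) =
        m * x / (b - a) * urnMoment a (m + 1) (x + a) (b - a) r := by
      rw [urnMoment, Finset.prod_range_succ', mul_comm, urnMoment]
      congr 1
      · simp
      · refine Finset.prod_congr rfl fun i _ => ?_
        push_cast
        congr 1 <;> ring
    rw [hval, ← hasSum_nat_add_iff' 1]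
    simp only [Finset.range_one, Finset.sum_singleton, Nat.zero_descFactorial_succ, Nat.cast_zero,
      mul_zero, sub_zero]
    refine hasSum_of_eq h fun k => ?_
    rw [← mul_assoc, ← urnWeight_absorb ha hx hba, Nat.succ_descFactorial_succ]
    push_cast
    ring

lemma cast_descFactorial_succ (k r : ℕ) :
    (k.descFactorial (r + 1) : ℝ) = ((k : ℝ) - r) * k.descFactorial r := by
  rw [Nat.descFactorial_succ]
  rcases le_or_gt r k with h | h
  · push_cast [Nat.cast_sub h]
    ring
  · simp [Nat.descFactorial_of_lt h]

/-- One factor of the factorial moment exceeds `n x` by at most a multiple of `1 + x`. -/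
lemma momentFactor_bounds {a x C D : ℝ} {n p r : ℕ} (ha : 0 ≤ a) (ha8 : a ≤ 1 / 8) (hx : 0 ≤ x)
    (hC : n * a ≤ C) (hr : r ≤ 3) (hD : 2 * (4 * p + 12 + 7 * C) ≤ D) :
    n * x ≤ ((n + p : ℕ) + r : ℝ) * (x + r * a) / (1 - (r + 1) * a) ∧
      ((n + p : ℕ) + r : ℝ) * (x + r * a) / (1 - (r + 1) * a) ≤ n * x + D * (1 + x) := by
  have hr' : (r : ℝ) ≤ 3 := by exact_mod_cast hr
  have r0 : (0 : ℝ) ≤ r := by positivity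
  have p0 : (0 : ℝ) ≤ p := by positivity
  have n0 : (0 : ℝ) ≤ n := by positivity
  have hna : 0 ≤ n * a := by positivity
  have hden : 1 / 2 ≤ 1 - (r + 1) * a := by nlinarith
  have hD0 : 0 ≤ D * (1 + x) := by
    have : 0 ≤ D := by linarith
    positivity
  push_cast
  constructor
  · rw [le_div_iff₀ (by linarith)]
    have : 0 ≤ n * x * ((r + 1) * a) := by positivity
    have : 0 ≤ (p + r) * (x + r * a) := by positivity
    have : 0 ≤ n * (r * a) := by positivity
    nlinarith
  · rw [div_le_iff₀ (by linarith)]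
    have h1 : D * (1 + x) / 2 ≤ D * (1 + x) * (1 - (r + 1) * a) := by nlinarith
    have h2 : (r : ℝ) * (n * a) ≤ 3 * C := mul_le_mul hr' hC hna (by norm_num)
    have h3 : (r + 1) * (n * a) * x ≤ 4 * C * x :=
      mul_le_mul_of_nonneg_right (mul_le_mul (by linarith) hC hna (by norm_num)) hx
    have h4 : (p + r) * (x + r * a) ≤ (p + 3) * (x + 3 * (1 / 8)) := by gcongr
    have hC0 : 0 ≤ C * x := mul_nonneg (hna.trans hC) hx
    have hC1 : 0 ≤ C := hna.trans hC
    have h5 : 2 * (4 * p + 12 + 7 * C) * (1 + x) ≤ D * (1 + x) := by gcongr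
    nlinarith [mul_nonneg p0 hx]

/-- The `r`-th factorial moment is `(n x) ^ r` up to a nonnegative error of order
`n ^ (r - 1) * (1 + x) ^ r`. -/
lemma urnMoment_bounds {a x C D : ℝ} {n p : ℕ} (hn : 1 ≤ n) (ha : 0 ≤ a) (ha8 : a ≤ 1 / 8)
    (hx : 0 ≤ x) (hC : n * a ≤ C) (hD : 2 * (4 * p + 12 + 7 * C) ≤ D) (r : ℕ) (hr : r ≤ 4) :
    (n * x) ^ r ≤ urnMoment a (n + p) x 1 r ∧
      (urnMoment a (n + p) x 1 r - (n * x) ^ r) * n ≤ (1 + 2 * D) ^ r * (n * (1 + x)) ^ r := by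
  have hn' : (1 : ℝ) ≤ n := by exact_mod_cast hn
  have hC1 : 0 ≤ C := le_trans (by positivity) hC
  have hD0 : 0 ≤ D := le_trans (by positivity) hD
  induction r with
  | zero => simp [urnMoment]
  | succ r ih =>
    obtain ⟨h1, h2⟩ := ih (by omega)
    obtain ⟨g1, g2⟩ := momentFactor_bounds (p := p) ha ha8 hx hC (show r ≤ 3 by omega) hD
    have hsucc : urnMoment a (n + p) x 1 (r + 1) = urnMoment a (n + p) x 1 r *
        (((n + p : ℕ) + r : ℝ) * (x + r * a) / (1 - (r + 1) * a)) := by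
      rw [urnMoment, Finset.prod_range_succ, urnMoment]
    rw [hsucc]
    set g := ((n + p : ℕ) + r : ℝ) * (x + r * a) / (1 - (r + 1) * a)
    set F := urnMoment a (n + p) x 1 r
    have hu : 0 ≤ n * x := by positivity
    have hur : 0 ≤ (n * x) ^ r := by positivity
    constructor
    · rw [pow_succ]
      exact mul_le_mul h1 g1 hu (hur.trans h1)
    · have hxr : (n * x) ^ r ≤ (1 + 2 * D) ^ r * (n * (1 + x)) ^ r := by
        rw [← mul_pow]
        refine pow_le_pow_left₀ hu ?_ r
        nlinarith [mul_nonneg hD0 (by positivity : 0 ≤ n * (1 + x))]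
      have hg : g ≤ n * x + D * (n * (1 + x)) := by
        nlinarith [mul_nonneg hD0 (by linarith : 0 ≤ 1 + x)]
      set T := (1 + 2 * D) ^ r * (n * (1 + x)) ^ r with hT
      have hT0 : 0 ≤ T := by positivity
      have e1 : (F - (n * x) ^ r) * n * g ≤ T * (n * x + D * (n * (1 + x))) :=
        mul_le_mul h2 hg (hu.trans g1) hT0
      have e2 : (n * x) ^ r * ((g - n * x) * n) ≤ T * (D * (1 + x) * n) := by
        refine mul_le_mul hxr ?_ (mul_nonneg (by linarith) (by linarith)) hT0
        exact mul_le_mul_of_nonneg_right (by linarith) (by linarith)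
      have e3 : T * (n * x) ≤ T * (n * (1 + x)) :=
        mul_le_mul_of_nonneg_left (by nlinarith) hT0
      calc (F * g - (n * x) ^ (r + 1)) * n
          = (F - (n * x) ^ r) * n * g + (n * x) ^ r * ((g - n * x) * n) := by ring
        _ ≤ T * ((1 + 2 * D) * (n * (1 + x))) := by linarith
        _ = (1 + 2 * D) ^ (r + 1) * (n * (1 + x)) ^ (r + 1) := by rw [hT]; ring

/-- Second and fourth central moments of the operator, both of order `1 / n`. -/
lemma centralMoments {a x C D B : ℝ} {n p : ℕ} (hn : 1 ≤ n) (ha : 0 ≤ a) (ha8 : a ≤ 1 / 8)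
    (hx : 0 ≤ x) (hC : n * a ≤ C) (hD : 2 * (4 * p + 12 + 7 * C) ≤ D) (hB : (1 + 2 * D) ^ 4 ≤ B) :
    ∃ M₂ M₄ : ℝ, HasSum (fun k : ℕ => w0 n p a x k * ((k : ℝ) / n - x) ^ 2) M₂ ∧
      HasSum (fun k : ℕ => w0 n p a x k * ((k : ℝ) / n - x) ^ 4) M₄ ∧
      n * M₂ ≤ 2 * (B + 1) * (1 + x) ^ 2 ∧ n * M₄ ≤ 33 * (B + 1) * (1 + x) ^ 4 := by
  have hn' : (1 : ℝ) ≤ n := by exact_mod_cast hn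
  have hn0 : (n : ℝ) ≠ 0 := by positivity
  have hC1 : 0 ≤ C := le_trans (by positivity) hC
  have hD0 : 0 ≤ D := le_trans (by positivity) hD
  have hmom : ∀ r : ℕ, r ≤ 4 → HasSum (fun k => w0 n p a x k * (k.descFactorial r : ℝ))
      (urnMoment a (n + p) x 1 r) := fun r hr => by
    have hr' : (r : ℝ) ≤ 4 := by exact_mod_cast hr
    exact hasSum_factorialMoment ha r (n + p) x 1 hx (by nlinarith)
  have s0 := hmom 0 (by norm_num)
  have s1 := hmom 1 (by norm_num)
  have s2 := hmom 2 (by norm_num)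
  have s3 := hmom 3 (by norm_num)
  have s4 := hmom 4 (by norm_num)
  set q : ℝ := n * (1 + x) with hq
  set u : ℝ := n * x with hu
  have hu0 : 0 ≤ u := by positivity
  have huq : u ≤ q := by rw [hu, hq]; nlinarith
  have hnq : n ≤ q := by rw [hq]; nlinarith
  have hq1 : 1 ≤ q := hn'.trans hnq
  have hB0 : 0 ≤ B := le_trans (by positivity) hB
  have hbd : ∀ r : ℕ, r ≤ 4 → u ^ r ≤ urnMoment a (n + p) x 1 r ∧
      (urnMoment a (n + p) x 1 r - u ^ r) * n ≤ B * q ^ r ∧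
      urnMoment a (n + p) x 1 r * n ≤ (B + 1) * q ^ (r + 1) := fun r hr => by
    obtain ⟨h1, h2⟩ := urnMoment_bounds hn ha ha8 hx hC hD r hr
    have h3 : (1 + 2 * D) ^ r ≤ B := (pow_le_pow_right₀ (by linarith) hr).trans hB
    have h4 : (urnMoment a (n + p) x 1 r - u ^ r) * n ≤ B * q ^ r :=
      h2.trans (by gcongr)
    refine ⟨h1, h4, ?_⟩
    have h5 : u ^ r * n ≤ q ^ r * q := by gcongr
    have h6 : B * q ^ r ≤ B * q ^ (r + 1) :=
      mul_le_mul_of_nonneg_left (pow_le_pow_right₀ hq1 (by omega)) hB0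
    rw [← pow_succ] at h5
    linarith
  have b0 : urnMoment a (n + p) x 1 0 = 1 := by simp [urnMoment]
  obtain ⟨l1, e1, f1⟩ := hbd 1 (by norm_num)
  obtain ⟨l2, e2, f2⟩ := hbd 2 (by norm_num)
  obtain ⟨l3, e3, f3⟩ := hbd 3 (by norm_num)
  obtain ⟨l4, e4, f4⟩ := hbd 4 (by norm_num)
  rw [b0] at s0
  set F1 := urnMoment a (n + p) x 1 1
  set F2 := urnMoment a (n + p) x 1 2
  set F3 := urnMoment a (n + p) x 1 3
  set F4 := urnMoment a (n + p) x 1 4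
  have d1 : ∀ k : ℕ, (k.descFactorial 1 : ℝ) = k := fun k => by simp
  have d2 : ∀ k : ℕ, (k.descFactorial 2 : ℝ) = (k - 1) * k := fun k => by
    rw [cast_descFactorial_succ, d1]; norm_num
  have d3 : ∀ k : ℕ, (k.descFactorial 3 : ℝ) = (k - 2) * ((k - 1) * k) := fun k => by
    rw [cast_descFactorial_succ, d2]; norm_num
  have d4 : ∀ k : ℕ, (k.descFactorial 4 : ℝ) = (k - 3) * ((k - 2) * ((k - 1) * k)) := fun k => by
    rw [cast_descFactorial_succ, d3]; norm_num
  have hdev : ∀ k : ℕ, (k : ℝ) / n - x = (k - u) / n := fun k => by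
    rw [hu]; field_simp
  refine ⟨(F2 + (1 - 2 * u) * F1 + u ^ 2 * 1) / n ^ 2,
    (F4 + (6 - 4 * u) * F3 + (7 - 12 * u + 6 * u ^ 2) * F2 +
      (1 - 4 * u + 6 * u ^ 2 - 4 * u ^ 3) * F1 + u ^ 4 * 1) / n ^ 4, ?_, ?_, ?_, ?_⟩
  · refine hasSum_of_eq (((s2.add (s1.mul_left (1 - 2 * u))).add (s0.mul_left (u ^ 2))).div_const
      ((n : ℝ) ^ 2)) fun k => ?_
    rw [hdev, d1, d2, Nat.descFactorial_zero, div_pow]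
    push_cast
    ring
  · refine hasSum_of_eq (((((s4.add (s3.mul_left (6 - 4 * u))).add
      (s2.mul_left (7 - 12 * u + 6 * u ^ 2))).add
      (s1.mul_left (1 - 4 * u + 6 * u ^ 2 - 4 * u ^ 3))).add
      (s0.mul_left (u ^ 4))).div_const ((n : ℝ) ^ 4)) fun k => ?_
    rw [hdev, d1, d2, d3, d4, Nat.descFactorial_zero, div_pow]
    push_cast
    ring
  · rw [← mul_div_assoc, div_le_iff₀ (by positivity),
      show 2 * (B + 1) * (1 + x) ^ 2 * (n : ℝ) ^ 2 = 2 * (B + 1) * q ^ 2 by rw [hq]; ring]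
    have g1 : 0 ≤ u * ((F1 - u ^ 1) * n) :=
      mul_nonneg hu0 (mul_nonneg (by linarith) (by linarith))
    have p2 : 0 ≤ q ^ 2 := by positivity
    have key : n * (F2 + (1 - 2 * u) * F1 + u ^ 2 * 1) =
        (F2 - u ^ 2) * n + F1 * n - 2 * (u * ((F1 - u ^ 1) * n)) := by ring
    rw [key]
    norm_num at f1 g1 ⊢
    linarith
  · rw [← mul_div_assoc, div_le_iff₀ (by positivity),
      show 33 * (B + 1) * (1 + x) ^ 4 * (n : ℝ) ^ 4 = 33 * (B + 1) * q ^ 4 by rw [hq]; ring]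
    have hn00 : (0 : ℝ) ≤ n := by linarith
    have F10 : 0 ≤ F1 := le_trans (by positivity) l1
    have F20 : 0 ≤ F2 := le_trans (by positivity) l2
    have g1 : 0 ≤ u ^ 3 * ((F1 - u ^ 1) * n) :=
      mul_nonneg (by positivity) (mul_nonneg (by linarith) hn00)
    have g3 : 0 ≤ u * ((F3 - u ^ 3) * n) :=
      mul_nonneg hu0 (mul_nonneg (by linarith) hn00)
    have g4 : 0 ≤ u * (F2 * n) := by positivity
    have g5 : 0 ≤ u * (F1 * n) := by positivity
    have g6 : u ^ 2 * ((F2 - u ^ 2) * n) ≤ q ^ 2 * (B * q ^ 2) :=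
      mul_le_mul (by gcongr) e2 (mul_nonneg (by linarith) hn00) (by positivity)
    have g7 : u ^ 2 * (F1 * n) ≤ q ^ 2 * ((B + 1) * q ^ (1 + 1)) :=
      mul_le_mul (by gcongr) f1 (by positivity) (by positivity)
    have p3 : (B + 1) * q ^ (2 + 1) ≤ (B + 1) * q ^ 4 := by gcongr; norm_num
    have p2 : (B + 1) * q ^ (1 + 1) ≤ (B + 1) * q ^ 4 := by gcongr; norm_num
    have p4 : 0 ≤ q ^ 4 := by positivity
    have key : n * (F4 + (6 - 4 * u) * F3 + (7 - 12 * u + 6 * u ^ 2) * F2 +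
        (1 - 4 * u + 6 * u ^ 2 - 4 * u ^ 3) * F1 + u ^ 4 * 1) =
        (F4 - u ^ 4) * n + 6 * (F3 * n) + 7 * (F2 * n) + F1 * n
        - 4 * (u * ((F3 - u ^ 3) * n)) - 12 * (u * (F2 * n)) - 4 * (u * (F1 * n))
        + 6 * (u ^ 2 * ((F2 - u ^ 2) * n)) + 6 * (u ^ 2 * (F1 * n))
        - 4 * (u ^ 3 * ((F1 - u ^ 1) * n)) := by ring
    rw [key]
    have q1 : q ^ 2 * (B * q ^ 2) = B * q ^ 4 := by ring
    have q2 : q ^ 2 * ((B + 1) * q ^ (1 + 1)) = (B + 1) * q ^ 4 := by ring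
    rw [q1] at g6
    rw [q2] at g7
    have p5 : 0 ≤ B * q ^ 4 := by positivity
    norm_num at f1 f2 f3 g1 p2 p3 ⊢
    linarith

/-! ### The weighted modulus of continuity -/

/-- Chaining steps of length at most `δ` from `s` to `t`. -/
lemma abs_sub_le_steps {f : ℝ → ℝ} {δ Ω : ℝ} (hδ : 0 < δ) (hΩ : 0 ≤ Ω)
    (h : ∀ s ≥ (0 : ℝ), ∀ d, 0 < d → d ≤ δ → |f (s + d) - f s| ≤ Ω * (1 + (s + d) ^ 2)) (j : ℕ) :
    ∀ s t : ℝ, 0 ≤ s → s ≤ t → t - s ≤ j * δ → |f t - f s| ≤ j * (Ω * (1 + t ^ 2)) := by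
  induction j with
  | zero =>
    intro s t _ hst ht
    have : t = s := by
      simp at ht
      linarith
    simp [this]
  | succ j ih =>
    intro s t hs hst ht
    push_cast at ht ⊢
    have hb : 0 ≤ Ω * (1 + t ^ 2) := by positivity
    have hj : 0 ≤ (j : ℝ) * (Ω * (1 + t ^ 2)) := by positivity
    rcases eq_or_lt_of_le hst with rfl | hlt
    · simp only [sub_self, abs_zero]
      linarith
    rcases le_or_gt (t - s) δ with hle | hgt
    · have := h s hs (t - s) (by linarith) hle
      rw [add_sub_cancel] at this
      linarith
    · have h1 := h s hs δ hδ le_rfl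
      have h2 := ih (s + δ) t (by linarith) (by linarith) (by linarith)
      have h3 : Ω * (1 + (s + δ) ^ 2) ≤ Ω * (1 + t ^ 2) := by
        gcongr
        linarith
      have h4 := abs_sub_le (f t) (f (s + δ)) (f s)
      linarith

lemma bigOmega_nonneg (f : ℝ → ℝ) (δ : ℝ) : 0 ≤ bigOmega f δ := by
  refine Real.sSup_nonneg ?_
  rintro y ⟨x, _, h, _, _, rfl⟩
  positivity

lemma abs_sub_le_bigOmega_mul {f : ℝ → ℝ} {δ M : ℝ} (hδ : 0 < δ)
    (hM : ∀ t ≥ (0 : ℝ), |f t| ≤ M * (1 + t ^ 2)) {s t : ℝ} (hs : 0 ≤ s) (hst : s ≤ t) :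
    |f t - f s| ≤ bigOmega f δ * (1 + t ^ 2) * (1 + (t - s) / δ) := by
  have hM0 : 0 ≤ M := by
    have := (abs_nonneg _).trans (hM 0 le_rfl)
    simpa using this
  have hstep : ∀ s ≥ (0 : ℝ), ∀ d, 0 < d → d ≤ δ →
      |f (s + d) - f s| ≤ bigOmega f δ * (1 + (s + d) ^ 2) := by
    intro s hs d hd hdδ
    rw [← div_le_iff₀ (by positivity)]
    refine le_csSup ⟨2 * M, ?_⟩ ⟨s, hs, d, hd, hdδ, rfl⟩
    -- The growth bound on `f` keeps the supremum from taking its junk value.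
    rintro y ⟨x, hx, h, hh, _, rfl⟩
    have hx0 : 0 ≤ x := hx
    rw [div_le_iff₀ (by positivity)]
    have h1 := hM (x + h) (by linarith)
    have h2 := hM x hx
    have h3 : M * (1 + x ^ 2) ≤ M * (1 + (x + h) ^ 2) := by
      gcongr
      linarith
    have h4 := abs_sub (f (x + h)) (f x)
    linarith
  have h0 : 0 ≤ (t - s) / δ := div_nonneg (by linarith) hδ.le
  have h1 := abs_sub_le_steps hδ (bigOmega_nonneg f δ) hstep ⌈(t - s) / δ⌉₊ s t hs hst
    (by rw [← div_le_iff₀ hδ]; exact Nat.le_ceil _)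
  have h2 : (⌈(t - s) / δ⌉₊ : ℝ) ≤ 1 + (t - s) / δ := by
    linarith [Nat.ceil_lt_add_one h0]
  have h3 : 0 ≤ bigOmega f δ * (1 + t ^ 2) := mul_nonneg (bigOmega_nonneg f δ) (by positivity)
  nlinarith

/-- Symmetric form at `δ = 1 / √n`, with the bound a polynomial in the deviation `t - x`. -/
lemma abs_sub_le_poly {f : ℝ → ℝ} {M : ℝ} {n : ℕ} (hn : 1 ≤ n)
    (hM : ∀ t ≥ (0 : ℝ), |f t| ≤ M * (1 + t ^ 2)) {x t : ℝ} (hx : 0 ≤ x) (ht : 0 ≤ t) :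
    |f t - f x| ≤ bigOmega f (1 / √n) * ((1 + 2 * x ^ 2) * (3 / 2) +
      (3 + n * (1 + 2 * x ^ 2) / 2) * (t - x) ^ 2 + n * (t - x) ^ 4) := by
  have hn' : (0 : ℝ) < n := by exact_mod_cast hn
  have hsq : √(n : ℝ) ^ 2 = n := Real.sq_sqrt hn'.le
  have hs : 0 < √(n : ℝ) := Real.sqrt_pos.mpr hn'
  have hΩ := bigOmega_nonneg f (1 / √n)
  have main : |f t - f x| ≤
      bigOmega f (1 / √n) * ((1 + (2 * x ^ 2 + 2 * (t - x) ^ 2)) * (1 + |t - x| * √n)) := by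
    rcases le_total x t with h | h
    · have h1 := abs_sub_le_bigOmega_mul (one_div_pos.mpr hs) hM hx h
      rw [div_div_eq_mul_div, div_one] at h1
      rw [abs_of_nonneg (sub_nonneg.mpr h)]
      refine h1.trans ?_
      rw [mul_assoc]
      have : 0 ≤ (t - x) * √n := mul_nonneg (by linarith) hs.le
      gcongr
      nlinarith [sq_nonneg (t - 2 * x)]
    · have h1 := abs_sub_le_bigOmega_mul (one_div_pos.mpr hs) hM ht h
      rw [div_div_eq_mul_div, div_one] at h1
      rw [abs_sub_comm, abs_sub_comm t x, abs_of_nonneg (sub_nonneg.mpr h)]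
      refine h1.trans ?_
      rw [mul_assoc]
      have : 0 ≤ (x - t) * √n := mul_nonneg (by linarith) hs.le
      gcongr
      nlinarith [sq_nonneg (t - x)]
  refine main.trans (mul_le_mul_of_nonneg_left ?_ hΩ)
  -- `y ≤ (1 + y²) / 2` with `y = |t - x| √n`
  have h2 : |t - x| * √n ≤ (1 + n * (t - x) ^ 2) / 2 := by
    have := sq_nonneg (|t - x| * √n - 1)
    have e : (|t - x| * √n) ^ 2 = n * (t - x) ^ 2 := by rw [mul_pow, hsq, sq_abs]; ring
    nlinarith
  calc _ ≤ (1 + (2 * x ^ 2 + 2 * (t - x) ^ 2)) * (1 + (1 + n * (t - x) ^ 2) / 2) := by gcongr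
    _ = _ := by ring

/-! ### The rate of convergence -/

/-- for `α_n ≥ 0` with `sup_n n·α_n < ∞` there are `K > 0` and `N ≥ 1`
such that for all `n ≥ N` and all continuous `f : [0,∞) → ℝ` with
`|f(t)| ≤ M_f(1+t²)` and `f(x)/(1+x²)` having a finite limit at infinity,
`sup_{x ≥ 0} |L_n^{(α_n)}(f;x) - f(x)|/(1+x²)^{5/2} ≤ K·Ω(f, 1/√n)`. -/
theorem weighted_rate_of_convergence (p : ℕ) (α : ℕ → ℝ) (hα : ∀ n, 0 ≤ α n)
    (hbd : ∃ C : ℝ, ∀ n : ℕ, (n : ℝ) * α n ≤ C) :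
    ∃ K > (0 : ℝ), ∃ N : ℕ, 1 ≤ N ∧ ∀ n ≥ N, ∀ f : ℝ → ℝ,
      ContinuousOn f (Set.Ici 0) →
      (∃ Mf > (0 : ℝ), ∀ t ≥ (0 : ℝ), |f t| ≤ Mf * (1 + t ^ 2)) →
      (∃ l : ℝ, Filter.Tendsto (fun x : ℝ => f x / (1 + x ^ 2))
        Filter.atTop (nhds l)) →
      ∀ x ≥ (0 : ℝ),
        |(∑' k : ℕ, w0 n p (α n) x k * f ((k : ℝ) / n)) - f x| /
            (1 + x ^ 2) ^ ((5 : ℝ) / 2) ≤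
          K * bigOmega f (1 / Real.sqrt n) := by
  obtain ⟨C, hC⟩ := hbd
  have hC0 : 0 ≤ C := by simpa using hC 0
  set D : ℝ := 2 * (4 * p + 12 + 7 * C) with hD
  set B : ℝ := (1 + 2 * D) ^ 4 with hB
  have hB0 : 0 ≤ B := by positivity
  -- `n ≥ 8 C` forces `α n ≤ 1 / 8`, so the denominators `1 - i α` with `i ≤ 4` are at least `1 / 2`.
  refine ⟨3 + 148 * (B + 1), by positivity, ⌈8 * C⌉₊ + 1, by omega, ?_⟩
  rintro n hn f - ⟨M, hM0, hM⟩ - x hx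
  have hn1 : 1 ≤ n := by omega
  have hn' : (1 : ℝ) ≤ n := by exact_mod_cast hn1
  have ha8 : α n ≤ 1 / 8 := by
    have h1 : 8 * C ≤ n := (Nat.le_ceil _).trans (by exact_mod_cast (by omega : ⌈8 * C⌉₊ ≤ n))
    have h2 := hC n
    have h3 : (n : ℝ) * α n ≤ n * (1 / 8) := by linarith
    exact le_of_mul_le_mul_left h3 (by linarith)
  have hx0 : 0 ≤ x := hx
  obtain ⟨M₂, M₄, s2, s4, b2, b4⟩ :=
    centralMoments (p := p) hn1 (hα n) ha8 hx (hC n) hD.ge hB.ge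
  have s0 : HasSum (w0 n p (α n) x) 1 := hasSum_urnWeight (hα n) hx one_pos (n + p)
  have hw : ∀ k, 0 ≤ w0 n p (α n) x k := urnWeight_nonneg (hα n) hx one_pos (n + p)
  set Ω := bigOmega f (1 / √n) with hΩ
  have hΩ0 : 0 ≤ Ω := bigOmega_nonneg _ _
  have hmaj := (((s0.mul_left ((1 + 2 * x ^ 2) * (3 / 2))).add
    (s2.mul_left (3 + n * (1 + 2 * x ^ 2) / 2))).add (s4.mul_left (n : ℝ))).mul_left Ω
  have hle : ∀ k : ℕ, ‖w0 n p (α n) x k * (f ((k : ℝ) / n) - f x)‖ ≤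
      Ω * ((1 + 2 * x ^ 2) * (3 / 2) * w0 n p (α n) x k +
        (3 + n * (1 + 2 * x ^ 2) / 2) * (w0 n p (α n) x k * ((k : ℝ) / n - x) ^ 2) +
        n * (w0 n p (α n) x k * ((k : ℝ) / n - x) ^ 4)) := fun k => by
    rw [norm_mul, Real.norm_of_nonneg (hw k), Real.norm_eq_abs]
    have := mul_le_mul_of_nonneg_left
      (abs_sub_le_poly hn1 hM hx (by positivity : 0 ≤ (k : ℝ) / n)) (hw k)
    rw [← hΩ] at this
    linarith
  have hsum := Summable.of_norm_bounded hmaj.summable hle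
  have hdiff : (∑' k : ℕ, w0 n p (α n) x k * f ((k : ℝ) / n)) - f x =
      ∑' k : ℕ, w0 n p (α n) x k * (f ((k : ℝ) / n) - f x) := by
    have h := hsum.hasSum.add (s0.mul_right (f x))
    have h' : HasSum (fun k : ℕ => w0 n p (α n) x k * f ((k : ℝ) / n))
        ((∑' k : ℕ, w0 n p (α n) x k * (f ((k : ℝ) / n) - f x)) + 1 * f x) := by
      refine hasSum_of_eq h fun k => ?_
      ring
    rw [h'.tsum_eq]
    ring
  have hmain := tsum_of_norm_bounded hmaj hle
  rw [← hdiff, Real.norm_eq_abs] at hmain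
  have hrpow : (1 + x ^ 2) ^ 2 ≤ (1 + x ^ 2) ^ ((5 : ℝ) / 2) := by
    rw [← Real.rpow_natCast]
    exact Real.rpow_le_rpow_of_exponent_le (by nlinarith) (by norm_num)
  have hM₂ : 0 ≤ M₂ := s2.nonneg fun k => mul_nonneg (hw k) (by positivity)
  rw [div_le_iff₀ (by positivity)]
  set y := x ^ 2 with hy
  have hy0 : 0 ≤ y := by positivity
  have q2 : (1 + x) ^ 2 ≤ 2 * (1 + y) := by nlinarith [sq_nonneg (x - 1)]
  have q4 : (1 + x) ^ 4 ≤ 4 * (1 + y) ^ 2 := by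
    calc (1 + x) ^ 4 = ((1 + x) ^ 2) ^ 2 := by ring
      _ ≤ (2 * (1 + y)) ^ 2 := by gcongr
      _ = _ := by ring
  have c2 : n * M₂ ≤ 4 * (B + 1) * (1 + y) := by
    have := mul_le_mul_of_nonneg_left q2 (by positivity : 0 ≤ 2 * (B + 1))
    linarith
  have c4 : n * M₄ ≤ 132 * (B + 1) * (1 + y) ^ 2 := by
    have := mul_le_mul_of_nonneg_left q4 (by positivity : 0 ≤ 33 * (B + 1))
    linarith
  have c2' : M₂ ≤ 4 * (B + 1) * (1 + y) := (le_mul_of_one_le_left hM₂ hn').trans c2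
  have hy2 : 1 + y ≤ (1 + y) ^ 2 := by nlinarith
  have hfin : (1 + 2 * y) * (3 / 2) * 1 + (3 + n * (1 + 2 * y) / 2) * M₂ + n * M₄ ≤
      (3 + 148 * (B + 1)) * (1 + y) ^ 2 := by
    have t1 : (1 + 2 * y) * (n * M₂) ≤ 2 * (1 + y) * (4 * (B + 1) * (1 + y)) :=
      mul_le_mul (by linarith) c2 (by positivity) (by positivity)
    have t2 : (B + 1) * (1 + y) ≤ (B + 1) * (1 + y) ^ 2 := by gcongr
    have t3 : 2 * (1 + y) * (4 * (B + 1) * (1 + y)) = 8 * ((B + 1) * (1 + y) ^ 2) := by ring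
    have t4 : 0 ≤ (B + 1) * (1 + y) ^ 2 := by positivity
    rw [t3] at t1
    linarith
  calc _ ≤ Ω * ((1 + 2 * y) * (3 / 2) * 1 + (3 + n * (1 + 2 * y) / 2) * M₂ + n * M₄) := hmain
    _ ≤ Ω * ((3 + 148 * (B + 1)) * (1 + y) ^ 2) := by gcongr
    _ ≤ Ω * ((3 + 148 * (B + 1)) * (1 + y) ^ ((5 : ℝ) / 2)) := by gcongr
    _ = _ := by ring
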